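/- Let I be a monomial ideal in R whose polarization P(I) is the facet ideal of a simplicial tree. Then R/I is Cohen-Macaulay if and only if I is unmixed (all associated primes of I have height equal to the height of I). -/

import Mathlib

/-!
Write `I` for the monomial ideal with exponent vectors `A t`. Under polarization, intersection and
inclusion of facets are componentwise minimum and comparison of exponent vectors, so the polarized
facets forming a forest is a condition on the exponent vectors themselves (`ExpForest`,
`expForest_of_isForest`). The equivalence is then proved directly in `R`, without passing to
the polarized quotient.

Unmixed implies Cohen-Macaulay. The heart is `ExpForest.extVanish`: the depth of `R/I` at a maximal
ideal is at least the smallest depth of `R/p` over the associated primes `p` of `I`. A leaf gives a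
generator `x^g x_i` in which `x_i` occurs with a larger exponent than in every other generator.
In the exact sequence `0 → R/(I : x^g) → R/I → R/(I, x^g) → 0` both outer ideals are again given
by forests (`ExpForest.sub`, `ExpForest.update`), and their associated primes are among those of
`I` (`AssocCert.of_sub`, `AssocCert.of_update`). Induction on the total degree of the generators
ends with ideals generated by variables. Depth is handled as the vanishing of `Extⁱ(R/P, R/I)`
(`ExtVanish`) and turned back into regular sequences by the Rees theorem. If all associated primes
have height `ht I`, the depth is at least `n - ht I`, which bounds the height of every maximal ideal
of `R/I`; the depth never exceeds that height (`rdepth_le_height`).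

Cohen-Macaulay implies unmixed. This holds for every monomial ideal (`ht_associatedPrime_eq`). At
the homogeneous maximal ideal `o` every associated prime `p` satisfies `ht p + depth ≤ ht o`, because
each term of a regular sequence makes an associated prime grow strictly (`height_add_length_le`).
A prime `(x_i : i ∈ c)` containing `I` shows that the height of `o/I`, which is the depth, is at least
`n - |c|`. Hence `ht p ≤ |c|` for all such `c`, and the smallest `|c|` is `ht I`.
-/

open MvPolynomial

/-- The monomial `x_1^{a_1} ⋯ x_n^{a_n}` with exponent vector `a`. -/
noncomputable def mon (k : Type) [Field k] {n : ℕ} (a : Fin n → ℕ) :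
    MvPolynomial (Fin n) k :=
  ∏ i, X i ^ a i

/-- The polarization of the monomial with exponent vector `a`: the square-free monomial
`∏_i ∏_{j < a_i} x_{i,j}` in the doubly-indexed variables `x_{i,j}`, `0 ≤ j ≤ m`. -/
noncomputable def polar (k : Type) [Field k] (m : ℕ) {n : ℕ} (a : Fin n → ℕ) :
    MvPolynomial (Fin n × Fin (m + 1)) k :=
  ∏ i, ∏ j ∈ Finset.univ.filter fun j : Fin (m + 1) => (j : ℕ) < a i, X (i, j)


/-- The monomial ideal generated by the monomials with exponent vectors `A t`. -/
noncomputable def monIdeal (k : Type) [Field k] {n q : ℕ} (A : Fin q → Fin n → ℕ) :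
    Ideal (MvPolynomial (Fin n) k) :=
  Ideal.span (Set.range fun t => mon k (A t))

/-- The polarization of the monomial ideal generated by the monomials `A t`:
the square-free monomial ideal generated by the polarizations of the generators. -/
noncomputable def polarIdeal (k : Type) [Field k] (m : ℕ) {n q : ℕ}
    (A : Fin q → Fin n → ℕ) : Ideal (MvPolynomial (Fin n × Fin (m + 1)) k) :=
  Ideal.span (Set.range fun t => polar k m (A t))


/-- The height of an ideal: the infimum of the heights (in the prime spectrum)
of the prime ideals containing it. -/
noncomputable def ht {R : Type} [CommRing R] (I : Ideal R) : ℕ∞ :=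
  ⨅ p ∈ {p : PrimeSpectrum R | I ≤ p.asIdeal}, Order.height p


/-- The vertex support of the polarization of the monomial with exponent vector `a`:
the facet `{(i,j) | j < a_i}` on the vertex set of doubly-indexed variables. -/
def suppF (m : ℕ) {n : ℕ} (a : Fin n → ℕ) : Finset (Fin n × Fin (m + 1)) :=
  Finset.univ.filter fun v => (v.2 : ℕ) < a v.1

/-- `F` is a leaf of the simplicial complex with facet set `Δ`: either `F` is the
only facet, or there is another facet `G` containing `F ∩ (Δ ∖ F)`. -/
def IsLeaf {V : Type} [DecidableEq V] (Δ : Finset (Finset V)) (F : Finset V) : Prop :=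
  F ∈ Δ ∧ (Δ = {F} ∨ ∃ G ∈ Δ.erase F, ∀ H ∈ Δ.erase F, F ∩ H ⊆ G)

/-- A simplicial complex (given by its facet set) is a forest if every nonempty
subcollection has a leaf. -/
def IsForest {V : Type} [DecidableEq V] (Δ : Finset (Finset V)) : Prop :=
  ∀ Γ ⊆ Δ, Γ.Nonempty → ∃ F, IsLeaf Γ F

/-- A tree is a connected forest: connectivity is expressed by chains of facets with
consecutive nonempty intersections. -/
def IsTree {V : Type} [DecidableEq V] (Δ : Finset (Finset V)) : Prop :=
  IsForest Δ ∧ ∀ F ∈ Δ, ∀ G ∈ Δ,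
    Relation.ReflTransGen (fun a b : Finset V => a ∈ Δ ∧ b ∈ Δ ∧ (a ∩ b).Nonempty) F G

/-- The facet complex of the polarization `𝒫(I)` of the monomial ideal with
exponent vectors `A`. -/
def facetComplex (m : ℕ) {n q : ℕ} (A : Fin q → Fin n → ℕ) :
    Finset (Finset (Fin n × Fin (m + 1))) :=
  Finset.image (fun t => suppF m (A t)) Finset.univ


/-- The depth of the module `M` with respect to the ideal `J`: the supremum of the
lengths of `M`-regular sequences consisting of elements of `J`. -/
noncomputable def rdepth {R : Type} [CommRing R] (J : Ideal R) (M : Type)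
    [AddCommGroup M] [Module R M] : ℕ∞ :=
  sSup {d : ℕ∞ | ∃ rs : List R, (rs.length : ℕ∞) = d ∧ (∀ r ∈ rs, r ∈ J) ∧
    RingTheory.Sequence.IsRegular M rs}

/-- A finite module `M` over a Noetherian ring is Cohen–Macaulay iff for every
maximal ideal `P` in its support, the depth of `M` with respect to `P` equals the
local dimension of `M` at `P` (the height of `P` modulo the annihilator of `M`). -/
def IsCMMod (R : Type) [CommRing R] (M : Type) [AddCommGroup M] [Module R M] : Prop :=
  ∀ P : Ideal R, P.IsMaximal → Module.annihilator R M ≤ P →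
    rdepth P M = ht (Ideal.map (Ideal.Quotient.mk (Module.annihilator R M)) P)

/-- A Noetherian ring is Cohen–Macaulay iff for every maximal ideal `P`, the depth
with respect to `P` equals the height of `P`. -/
def IsCMRing (A : Type) [CommRing A] : Prop :=
  ∀ P : Ideal A, P.IsMaximal → rdepth P A = ht P

/-! ### Depth through vanishing of Ext -/

section ExtDepth

open CategoryTheory Abelian Limits

/-- `ExtVanish P d I` says that `Extⁱ(R/P, R/I) = 0` for all `i < d`. For a maximal ideal `P ⊇ I`
of a Noetherian ring this is, by the Rees theorem, the inequality `depth_P(R/I) ≥ d`; it holds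
trivially for the unit ideal. -/
def ExtVanish {R : Type} [CommRing R] (P : Ideal R) (d : ℕ) (I : Ideal R) : Prop :=
  ∀ i < d, Subsingleton (Ext (ModuleCat.of R (R ⧸ P)) (ModuleCat.of R (R ⧸ I)) i)

lemma ExtVanish.mono {R : Type} [CommRing R] {P I : Ideal R} {d e : ℕ} (h : ExtVanish P d I)
    (hed : e ≤ d) : ExtVanish P e I := fun i hi => h i (hi.trans_le hed)

lemma extVanish_top {R : Type} [CommRing R] (P : Ideal R) (d : ℕ) : ExtVanish P d ⊤ := by
  intro i _
  have h0 : IsZero (ModuleCat.of R (R ⧸ (⊤ : Ideal R))) := ModuleCat.isZero_of_subsingleton _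
  refine ⟨fun a b => ?_⟩
  rw [← Ext.comp_mk₀_id a, ← Ext.comp_mk₀_id b, h0.eq_of_src (𝟙 _) 0, Ext.mk₀_zero,
    Ext.comp_zero, Ext.comp_zero]

/-- If `K = I : g`, multiplication by `g` gives a short exact sequence
`0 → R/K → R/I → R/(I, g) → 0`. -/
lemma exists_colon_shortExact {R : Type} [CommRing R] {I K : Ideal R} {g : R}
    (hK : ∀ f, g * f ∈ I ↔ f ∈ K) :
    ∃ (f : ModuleCat.of R (R ⧸ K) ⟶ ModuleCat.of R (R ⧸ I))
      (p : ModuleCat.of R (R ⧸ I) ⟶ ModuleCat.of R (R ⧸ (I ⊔ Ideal.span {g}))) (w : f ≫ p = 0),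
      (ShortComplex.mk f p w).ShortExact := by
  let f : (R ⧸ K) →ₗ[R] (R ⧸ I) := Submodule.mapQ K I (LinearMap.mulLeft R g)
    (fun x hx => (hK x).2 hx)
  let p : (R ⧸ I) →ₗ[R] (R ⧸ (I ⊔ Ideal.span {g})) := Submodule.factor le_sup_left
  have hw : p.comp f = 0 := by
    ext
    change Submodule.Quotient.mk (g * 1) = (0 : R ⧸ (I ⊔ Ideal.span {g}))
    rw [Submodule.Quotient.mk_eq_zero]
    simpa using Ideal.mem_sup_right (Ideal.mem_span_singleton_self g)
  refine ⟨ModuleCat.ofHom f, ModuleCat.ofHom p, by rw [← ModuleCat.ofHom_comp, hw]; rfl, ?_⟩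
  refine ModuleCat.shortComplex_shortExact _ ?_ ?_ ?_
  · intro y
    change p y = 0 ↔ y ∈ Set.range f
    constructor
    · obtain ⟨y, rfl⟩ := Submodule.Quotient.mk_surjective _ y
      intro h
      replace h : y ∈ I ⊔ Ideal.span {g} := (Submodule.Quotient.mk_eq_zero _).1 h
      obtain ⟨a, ha, b, hb, rfl⟩ := Submodule.mem_sup.1 h
      obtain ⟨c, rfl⟩ := Ideal.mem_span_singleton'.1 hb
      refine ⟨Submodule.Quotient.mk c, ?_⟩
      change Submodule.Quotient.mk (g * c) = _
      rw [Submodule.Quotient.eq]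
      have : g * c - (a + c * g) = - a := by ring
      rw [this]; exact I.neg_mem ha
    · rintro ⟨x, rfl⟩
      exact LinearMap.congr_fun hw x
  · change Function.Injective f
    rw [injective_iff_map_eq_zero]
    intro y
    obtain ⟨y, rfl⟩ := Submodule.Quotient.mk_surjective _ y
    intro h
    rw [Submodule.Quotient.mk_eq_zero]
    exact (hK y).1 ((Submodule.Quotient.mk_eq_zero _).1 h)
  · change Function.Surjective p
    exact Submodule.factor_surjective _

/-- The depth lemma for the middle term of `0 → R/(I : g) → R/I → R/(I, g) → 0`. -/
lemma ExtVanish.of_colon_of_sup {R : Type} [CommRing R] {P I K : Ideal R} {g : R} {d : ℕ}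
    (hK : ∀ f, g * f ∈ I ↔ f ∈ K) (h₁ : ExtVanish P d K)
    (h₂ : ExtVanish P d (I ⊔ Ideal.span {g})) : ExtVanish P d I := by
  obtain ⟨f, p, w, hS⟩ := exists_colon_shortExact hK
  intro i hi
  have z₁ := AddCommGrpCat.isZero_of_iff_subsingleton.mpr (h₁ i hi)
  have z₂ := AddCommGrpCat.isZero_of_iff_subsingleton.mpr (h₂ i hi)
  exact AddCommGrpCat.subsingleton_of_isZero <| ShortComplex.Exact.isZero_of_both_zeros
    (Ext.covariant_sequence_exact₂' (ModuleCat.of R (R ⧸ P)) hS i)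
    (z₁.eq_zero_of_src _) (z₂.eq_zero_of_tgt _)

/-- The depth lemma for the right-hand term of `0 → R/(I : g) → R/I → R/(I, g) → 0`. -/
lemma ExtVanish.sup_span_singleton {R : Type} [CommRing R] {P I K : Ideal R} {g : R} {d : ℕ}
    (hK : ∀ f, g * f ∈ I ↔ f ∈ K) (h₁ : ExtVanish P (d + 1) K)
    (h₂ : ExtVanish P (d + 1) I) : ExtVanish P d (I ⊔ Ideal.span {g}) := by
  obtain ⟨f, p, w, hS⟩ := exists_colon_shortExact hK
  intro i hi
  have z₁ := AddCommGrpCat.isZero_of_iff_subsingleton.mpr (h₂ i (by omega))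
  have z₂ := AddCommGrpCat.isZero_of_iff_subsingleton.mpr (h₁ (i + 1) (by omega))
  exact AddCommGrpCat.subsingleton_of_isZero <| ShortComplex.Exact.isZero_of_both_zeros
    (Ext.covariant_sequence_exact₃' (ModuleCat.of R (R ⧸ P)) hS i (i + 1) rfl)
    (z₁.eq_zero_of_src _) (z₂.eq_zero_of_tgt _)

open Pointwise in
lemma smul_top_quotient_ne_top {R : Type} [CommRing R] {P I : Ideal R} (hP : P ≠ ⊤)
    (hIP : I ≤ P) : P • (⊤ : Submodule R (R ⧸ I)) ≠ ⊤ := by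
  intro h
  have h1 : (Submodule.Quotient.mk 1 : R ⧸ I) ∈ P • (⊤ : Submodule R (R ⧸ I)) := by
    rw [h]; trivial
  have h2 : P • (⊤ : Submodule R (R ⧸ I)) ≤ Submodule.map I.mkQ P := by
    rw [Submodule.smul_le]
    rintro r hr x -
    obtain ⟨x, rfl⟩ := Submodule.Quotient.mk_surjective _ x
    exact ⟨r * x, P.mul_mem_right _ hr, rfl⟩
  obtain ⟨y, hy, hy1⟩ := h2 h1
  have h3 : y - 1 ∈ I := (Submodule.Quotient.eq I).1 hy1
  refine hP ((Ideal.eq_top_iff_one _).2 ?_)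
  have := P.sub_mem hy (hIP h3)
  simpa using this

lemma isRegular_quotient_of_mem {R : Type} [CommRing R] {P I : Ideal R} (hP : P ≠ ⊤)
    (hIP : I ≤ P) {rs : List R} (hrs : ∀ r ∈ rs, r ∈ P)
    (h : RingTheory.Sequence.IsWeaklyRegular (R ⧸ I) rs) :
    RingTheory.Sequence.IsRegular (R ⧸ I) rs :=
  ⟨h, fun h' => smul_top_quotient_ne_top hP hIP
    (top_le_iff.1 (h'.le.trans (Submodule.smul_mono_left (Ideal.span_le.2 hrs))))⟩

open Pointwise in
/-- Both directions of the Rees theorem for the quotient `R/I` and a maximal ideal `P ⊇ I`. -/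
lemma extVanish_iff_exists_isRegular {R : Type} [CommRing R] [IsNoetherianRing R] {P I : Ideal R}
    (hP : P.IsMaximal) (hIP : I ≤ P) (d : ℕ) :
    ExtVanish P d I ↔ ∃ rs : List R, rs.length = d ∧ (∀ r ∈ rs, r ∈ P) ∧
      RingTheory.Sequence.IsRegular (R ⧸ I) rs := by
  have hlt : P • (⊤ : Submodule R (ModuleCat.of R (R ⧸ I))) < ⊤ :=
    lt_top_iff_ne_top.2 (smul_top_quotient_ne_top hP.ne_top hIP)
  have hsupp : Module.support R (ModuleCat.of R (R ⧸ P)) = PrimeSpectrum.zeroLocus P := by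
    change Module.support R (R ⧸ P) = _
    rw [Module.support_eq_zeroLocus, Ideal.annihilator_quotient]
  have : Module.Finite R (ModuleCat.of R (R ⧸ P)) := inferInstanceAs (Module.Finite R (R ⧸ P))
  have : Module.Finite R (ModuleCat.of R (R ⧸ I)) := inferInstanceAs (Module.Finite R (R ⧸ I))
  constructor
  · intro h
    exact ModuleCat.exists_isRegular_of_exists_subsingleton_ext P d (ModuleCat.of R (R ⧸ I)) hlt
      (ModuleCat.of R (R ⧸ P)) hsupp h
  · rintro ⟨rs, rfl, hrs, hreg⟩
    exact ModuleCat.subsingleton_ext_of_exists_isRegular P (ModuleCat.of R (R ⧸ P)) hsupp.subset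
      (ModuleCat.of R (R ⧸ I)) hlt rs hrs hreg

end ExtDepth

/-! ### Depth of polynomial rings -/

section PolynomialDepth

open RingTheory.Sequence

/-- A regular sequence of constants extends by any monic polynomial `g`: modulo the constants `g`
stays monic, hence a nonzerodivisor. -/
lemma isWeaklyRegular_map_C_append {C : Type} [CommRing C] {rs : List C}
    (h : IsWeaklyRegular C rs) {g : Polynomial C} (hg : g.Monic) :
    IsWeaklyRegular (Polynomial C) (rs.map Polynomial.C ++ [g]) := by
  rw [isWeaklyRegular_append_iff]
  refine ⟨h.of_flat (S := Polynomial C), ?_⟩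
  rw [isWeaklyRegular_singleton_iff, isSMulRegular_quotient_iff_mem_of_smul_mem]
  intro x hx
  rw [smul_eq_mul, smul_eq_mul, Ideal.mul_top, ← Ideal.map_ofList] at *
  have key : ∀ y : Polynomial C, y ∈ Ideal.map Polynomial.C (Ideal.ofList rs) ↔
      y.map (Ideal.Quotient.mk (Ideal.ofList rs)) = 0 := by
    intro y
    rw [← Ideal.mk_ker (I := Ideal.ofList rs), ← Polynomial.ker_mapRingHom, Ideal.mk_ker]
    rfl
  rw [key] at *
  rw [Polynomial.map_mul] at hx
  exact ((hg.map _).mul_right_eq_zero_iff).1 hx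

/-- An ideal of `C[x₁, …, xₙ]` containing a monic polynomial in each variable separately contains
a weakly regular sequence of length `n`. -/
lemma exists_isWeaklyRegular_of_monic {C : Type} [CommRing C] (n : ℕ)
    (P : Ideal (MvPolynomial (Fin n) C))
    (hP : ∀ i, ∃ g : Polynomial C, g.Monic ∧ Polynomial.aeval (X i : MvPolynomial (Fin n) C) g ∈ P) :
    ∃ rs : List (MvPolynomial (Fin n) C), rs.length = n ∧ (∀ r ∈ rs, r ∈ P) ∧
      IsWeaklyRegular (MvPolynomial (Fin n) C) rs := by
  induction n with
  | zero => exact ⟨[], by simp⟩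
  | succ n ih =>
    let e := (finSuccEquiv C n).symm
    let φ : MvPolynomial (Fin n) C →ₐ[C] MvPolynomial (Fin (n + 1)) C :=
      e.toAlgHom.comp
        (IsScalarTower.toAlgHom C (MvPolynomial (Fin n) C) (Polynomial (MvPolynomial (Fin n) C)))
    have hφ : ∀ f, φ f = e (Polynomial.C f) := fun f => rfl
    have hφX : ∀ i, φ (X i) = X i.succ := by
      intro i
      rw [hφ, ← finSuccEquiv_X_succ (R := C)]
      exact (finSuccEquiv C n).symm_apply_apply _
    obtain ⟨rs, hlen, hrs, hreg⟩ := ih (P.comap φ.toRingHom) (by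
      intro i
      obtain ⟨g, hg, hgP⟩ := hP i.succ
      refine ⟨g, hg, ?_⟩
      rw [Ideal.mem_comap]
      change φ (Polynomial.aeval (X i) g) ∈ P
      rwa [← Polynomial.aeval_algHom_apply, hφX])
    obtain ⟨g, hg, hgP⟩ := hP 0
    have hX : e Polynomial.X = X 0 := by
      rw [← finSuccEquiv_X_zero (R := C)]
      exact (finSuccEquiv C n).symm_apply_apply _
    have he : e (g.map (algebraMap C (MvPolynomial (Fin n) C))) = Polynomial.aeval (X 0) g := by
      rw [← hX]
      change _ = Polynomial.aeval (e.toAlgHom Polynomial.X) g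
      rw [Polynomial.aeval_algHom_apply, Polynomial.aeval_X_left_eq_map]
      rfl
    have hreg' := isWeaklyRegular_map_C_append hreg
      (hg.map (algebraMap C (MvPolynomial (Fin n) C)))
    refine ⟨(rs.map Polynomial.C ++ [g.map (algebraMap C (MvPolynomial (Fin n) C))]).map e,
      by simp [hlen], ?_, ?_⟩
    · intro r hr
      simp only [List.map_append, List.map_map, List.map_cons, List.map_nil, List.mem_append,
        List.mem_map, List.mem_singleton] at hr
      rcases hr with ⟨f, hf, rfl⟩ | rfl
      · exact hrs f hf
      · rwa [he]
    · refine (AddEquiv.isWeaklyRegular_congr (e := e.toAddEquiv) ?_).1 hreg'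
      rw [List.forall₂_map_right_iff, List.forall₂_same]
      intro r _ x
      exact map_mul e r x

/-- A maximal ideal `P` of `k[x₁, …, xₙ]` has depth at least `n`: since `R/P` is finite over `k`,
each variable satisfies a monic equation modulo `P`. -/
lemma extVanish_bot {k : Type} [Field k] {n : ℕ} {P : Ideal (MvPolynomial (Fin n) k)}
    (hP : P.IsMaximal) : ExtVanish P n ⊥ := by
  rw [extVanish_iff_exists_isRegular hP bot_le]
  obtain ⟨rs, hlen, hrs, hreg⟩ := exists_isWeaklyRegular_of_monic n P (by
    intro i
    let := Ideal.Quotient.field P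
    have : Module.Finite k (MvPolynomial (Fin n) k ⧸ P) :=
      finite_of_finite_type_of_isJacobsonRing k _
    obtain ⟨g, hg, hg0⟩ := Algebra.IsIntegral.isIntegral (R := k)
      (Ideal.Quotient.mk P (X i))
    refine ⟨g, hg, ?_⟩
    rw [← Ideal.Quotient.eq_zero_iff_mem, ← hg0, ← Polynomial.aeval_def]
    exact (Polynomial.aeval_algHom_apply (Ideal.Quotient.mkₐ k P) (X i) g).symm)
  exact ⟨rs, hlen, hrs, isRegular_quotient_of_mem hP.ne_top bot_le hrs <|
    ((Submodule.quotEquivOfEqBot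
      (⊥ : Submodule (MvPolynomial (Fin n) k) (MvPolynomial (Fin n) k)) rfl).isWeaklyRegular_congr
        rs).2 hreg⟩

end PolynomialDepth

/-! ### Monomial ideals and their associated primes -/

section MonomialIdeals

variable {k : Type} [Field k] {n : ℕ} {ι : Type}

/-- The monomial ideal generated by the monomials `x^(a t)` with `t ∈ T`. -/
noncomputable def genIdeal (k : Type) [Field k] {n : ℕ} {ι : Type} (T : Finset ι)
    (a : ι → Fin n → ℕ) : Ideal (MvPolynomial (Fin n) k) :=
  Ideal.span ((fun t => mon k (a t)) '' T)

/-- The prime ideal generated by the variables `x_i` with `i ∈ c`. -/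
noncomputable def varIdeal (k : Type) [Field k] {n : ℕ} (c : Finset (Fin n)) :
    Ideal (MvPolynomial (Fin n) k) :=
  Ideal.span (X '' (c : Set (Fin n)))

lemma mon_eq_monomial (u : Fin n → ℕ) :
    mon k u = monomial (Finsupp.equivFunOnFinite.symm u) 1 := by
  rw [monomial_eq, Finsupp.prod_fintype _ _ (by simp)]
  simp [mon]

lemma mem_genIdeal {T : Finset ι} {a : ι → Fin n → ℕ} {f : MvPolynomial (Fin n) k} :
    f ∈ genIdeal k T a ↔ ∀ m ∈ f.support, ∃ t ∈ T, a t ≤ ⇑m := by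
  have : genIdeal k T a = Ideal.span ((fun s => monomial s (1 : k)) ''
      ((fun t => Finsupp.equivFunOnFinite.symm (a t)) '' (T : Set ι))) := by
    rw [genIdeal, Set.image_image]
    simp only [mon_eq_monomial]
  rw [this, mem_ideal_span_monomial_image]
  simp only [Set.mem_image, Finset.mem_coe, exists_exists_and_eq_and]
  rfl

lemma mon_mem_genIdeal {T : Finset ι} {a : ι → Fin n → ℕ} {u : Fin n → ℕ} {t : ι} (ht : t ∈ T)
    (h : a t ≤ u) : mon k u ∈ genIdeal k T a := by
  classical
  rw [mem_genIdeal, mon_eq_monomial]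
  intro m hm
  rw [support_monomial, if_neg one_ne_zero, Finset.mem_singleton] at hm
  exact ⟨t, ht, by simpa [hm] using h⟩

lemma genIdeal_le {T : Finset ι} {a : ι → Fin n → ℕ} {J : Ideal (MvPolynomial (Fin n) k)} :
    genIdeal k T a ≤ J ↔ ∀ t ∈ T, mon k (a t) ∈ J := by
  rw [genIdeal, Ideal.span_le]
  simp [Set.subset_def]

lemma mon_mul_mem_genIdeal {T : Finset ι} {a : ι → Fin n → ℕ} (g : Fin n → ℕ)
    (f : MvPolynomial (Fin n) k) :
    mon k g * f ∈ genIdeal k T a ↔ f ∈ genIdeal k T (fun t => a t - g) := by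
  rw [mem_genIdeal, mem_genIdeal, mon_eq_monomial]
  constructor
  · intro h m hm
    obtain ⟨t, ht, hle⟩ := h (Finsupp.equivFunOnFinite.symm g + m) (by
      rw [mem_support_iff, coeff_monomial_mul, one_mul]; exact mem_support_iff.1 hm)
    refine ⟨t, ht, fun i => ?_⟩
    have := hle i
    simp only [Finsupp.coe_add, Pi.add_apply, Finsupp.equivFunOnFinite_symm_apply_apply,
      Pi.sub_apply] at this ⊢
    omega
  · intro h m hm
    rw [mem_support_iff, coeff_monomial_mul', one_mul] at hm
    split_ifs at hm with hg
    · obtain ⟨t, ht, hle⟩ := h _ (mem_support_iff.2 hm)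
      refine ⟨t, ht, fun i => ?_⟩
      have h1 := hle i
      have h2 : g i ≤ m i := hg i
      simp only [Finsupp.coe_tsub, Finsupp.equivFunOnFinite_symm_apply_apply,
        Pi.sub_apply] at h1 ⊢
      omega
    · exact absurd rfl hm

lemma mem_varIdeal {c : Finset (Fin n)} {f : MvPolynomial (Fin n) k} :
    f ∈ varIdeal k c ↔ ∀ m ∈ f.support, ∃ i ∈ c, m i ≠ 0 :=
  mem_ideal_span_X_image

lemma X_mem_varIdeal {c : Finset (Fin n)} {i : Fin n} :
    (X i : MvPolynomial (Fin n) k) ∈ varIdeal k c ↔ i ∈ c := by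
  rw [mem_varIdeal, support_X]
  simp [Finsupp.single_apply]

instance varIdeal_isPrime (c : Finset (Fin n)) : (varIdeal k c).IsPrime := by
  classical
  let φ : MvPolynomial (Fin n) k →ₐ[k] MvPolynomial (Fin n) k :=
    aeval (fun i => if i ∈ c then 0 else X i)
  have hker : varIdeal k c = RingHom.ker φ := by
    apply le_antisymm
    · rw [varIdeal, Ideal.span_le]
      rintro _ ⟨i, hi, rfl⟩
      have hi' : i ∈ c := hi
      simp [φ, hi']
    · intro f hf
      have hcomp : (Ideal.Quotient.mkₐ k (varIdeal k c)).comp φ =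
          Ideal.Quotient.mkₐ k (varIdeal k c) := by
        ext i
        by_cases hi : i ∈ c
        · simpa [φ, hi] using
            (Ideal.Quotient.eq_zero_iff_mem.2 (X_mem_varIdeal (k := k).2 hi)).symm
        · simp [φ, hi]
      have := DFunLike.congr_fun hcomp f
      rw [AlgHom.comp_apply, (RingHom.mem_ker).1 hf, map_zero] at this
      exact Ideal.Quotient.eq_zero_iff_mem.1 this.symm
  rw [hker]
  exact RingHom.ker_isPrime _

lemma varIdeal_insert (c : Finset (Fin n)) (i : Fin n) :
    varIdeal k (insert i c) = varIdeal k c ⊔ Ideal.span {X i} := by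
  rw [varIdeal, varIdeal, ← Ideal.span_union, Finset.coe_insert, Set.image_insert_eq,
    Set.union_singleton]

/-- `depth R/(x_i : i ∈ c) ≥ n - |c|` in the sense of `ExtVanish`, at every maximal ideal, whether or
not it contains the variables of `c`. -/
lemma extVanish_varIdeal {P : Ideal (MvPolynomial (Fin n) k)} (hP : P.IsMaximal)
    (c : Finset (Fin n)) : ∀ d, d + c.card ≤ n → ExtVanish P d (varIdeal k c) := by
  classical
  induction c using Finset.induction_on with
  | empty =>
    intro d hd
    have : varIdeal k (∅ : Finset (Fin n)) = ⊥ := by simp [varIdeal]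
    rw [this]
    exact (extVanish_bot hP).mono (by simpa using hd)
  | insert i c hi ih =>
    intro d hd
    rw [Finset.card_insert_of_notMem hi] at hd
    rw [varIdeal_insert]
    have h := ih (d + 1) (by omega)
    refine ExtVanish.sup_span_singleton (K := varIdeal k c) (fun f => ?_) h h
    rw [(varIdeal_isPrime c).mul_mem_iff_mem_or_mem, X_mem_varIdeal]
    simp [hi]

/-- A combinatorial certificate for `(x_i : i ∈ c)` being the annihilator of the class of the
monomial `x^u` modulo the ideal generated by the monomials `x^(a t)`, `t ∈ T`. -/
def AssocCert (T : Finset ι) (a : ι → Fin n → ℕ) (c : Finset (Fin n)) : Prop :=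
  ∃ u : Fin n → ℕ, (∀ i ∈ c, ∃ t ∈ T, a t ≤ u + Pi.single i 1) ∧
    ∀ v : Fin n → ℕ, (∀ i ∈ c, v i = 0) → ∀ t ∈ T, ¬ a t ≤ u + v

lemma AssocCert.mem_associatedPrimes {T : Finset ι} {a : ι → Fin n → ℕ} {c : Finset (Fin n)}
    (h : AssocCert T a c) : varIdeal k c ∈
      associatedPrimes (MvPolynomial (Fin n) k) (MvPolynomial (Fin n) k ⧸ genIdeal k T a) := by
  obtain ⟨u, hu, hv⟩ := h
  refine isAssociatedPrime_iff.2 ⟨inferInstance, Submodule.Quotient.mk (mon k u), ?_⟩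
  ext f
  rw [Submodule.mem_colon_singleton, Submodule.mem_bot, ← Submodule.Quotient.mk_smul,
    Submodule.Quotient.mk_eq_zero, smul_eq_mul, mul_comm, mon_mul_mem_genIdeal, mem_genIdeal,
    mem_varIdeal]
  refine forall₂_congr fun m _ => ⟨?_, ?_⟩
  · rintro ⟨i, hi, hm⟩
    obtain ⟨t, ht, hle⟩ := hu i hi
    refine ⟨t, ht, fun j => ?_⟩
    have h1 := hle j
    by_cases hj : j = i
    · subst hj
      simp only [Pi.add_apply, Pi.single_eq_same, Pi.sub_apply] at h1 ⊢
      omega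
    · simp only [Pi.add_apply, Pi.single_eq_of_ne hj, Pi.sub_apply] at h1 ⊢
      omega
  · rintro ⟨t, ht, hle⟩
    by_contra! hm
    refine hv m hm t ht fun j => ?_
    have h1 := hle j
    simp only [Pi.add_apply, Pi.sub_apply] at h1 ⊢
    omega

end MonomialIdeals

/-! ### Forests of exponent vectors and the depth bound -/

section Forests

variable {n : ℕ} {ι : Type} [DecidableEq ι]

lemma single_one_le_iff {i : Fin n} {f : Fin n → ℕ} : Pi.single i 1 ≤ f ↔ 1 ≤ f i := by
  refine ⟨fun h => by simpa using h i, fun h j => ?_⟩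
  by_cases hj : j = i
  · subst hj; simpa using h
  · simp [hj]

/-- The exponent vectors `a t`, `t ∈ T`, form a forest: every nonempty subfamily has a leaf. Under
polarization `⊓` and `≤` on exponent vectors are intersection and inclusion of facets. -/
def ExpForest (T : Finset ι) (a : ι → Fin n → ℕ) : Prop :=
  ∀ Γ ⊆ T, Γ.Nonempty →
    ∃ t ∈ Γ, Γ = {t} ∨ ∃ s ∈ Γ.erase t, ∀ r ∈ Γ.erase t, a t ⊓ a r ≤ a s

lemma ExpForest.subset {T T' : Finset ι} {a : ι → Fin n → ℕ} (h : ExpForest T a) (hT : T' ⊆ T) :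
    ExpForest T' a := fun Γ hΓ => h Γ (hΓ.trans hT)

lemma ExpForest.sub {T : Finset ι} {a : ι → Fin n → ℕ} (h : ExpForest T a) (g : Fin n → ℕ) :
    ExpForest T (fun t => a t - g) := by
  intro Γ hΓ hne
  obtain ⟨t, ht, h | ⟨s, hs, hr⟩⟩ := h Γ hΓ hne
  · exact ⟨t, ht, Or.inl h⟩
  · refine ⟨t, ht, Or.inr ⟨s, hs, fun r hrΓ i => ?_⟩⟩
    have := hr r hrΓ i
    simp only [Pi.inf_apply, Pi.sub_apply] at this ⊢
    omega

/-- A member of a forest may be shrunk as long as it keeps all its intersections with the other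
members. -/
lemma ExpForest.update {T : Finset ι} {a : ι → Fin n → ℕ} (h : ExpForest T a) {F : ι} (hF : F ∈ T)
    {g : Fin n → ℕ} (hg : g ≤ a F) (hr : ∀ r ∈ T, r ≠ F → a F ⊓ a r ≤ g) :
    ExpForest T (Function.update a F g) := by
  intro Γ hΓ hne
  obtain ⟨t, ht, h | ⟨s, hs, hs'⟩⟩ := h Γ hΓ hne
  · exact ⟨t, ht, Or.inl h⟩
  refine ⟨t, ht, Or.inr ⟨s, hs, fun r hrΓ => ?_⟩⟩
  have hupd : ∀ r, Function.update a F g r ≤ a r := by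
    intro r
    by_cases hrF : r = F
    · subst hrF; simpa using hg
    · simp [hrF]
  have hle : Function.update a F g t ⊓ Function.update a F g r ≤ a s :=
    (inf_le_inf (hupd t) (hupd r)).trans (hs' r hrΓ)
  by_cases hsF : s = F
  · subst hsF
    rw [Function.update_self]
    have hts : t ≠ s := (Finset.ne_of_mem_erase hs).symm
    refine le_trans (le_inf hle (inf_le_left.trans (hupd t))) (hr t (hΓ ht) hts)
  · rwa [Function.update_of_ne hsF]

/-- The number of generators plus the sum of their degrees; it measures progress in the induction
on monomial ideals. -/
def weight (T : Finset ι) (a : ι → Fin n → ℕ) : ℕ := ∑ t ∈ T, ((∑ i, a t i) + 1)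

omit [DecidableEq ι] in
lemma weight_lt_weight {T : Finset ι} {a b : ι → Fin n → ℕ} (hab : ∀ t ∈ T, b t ≤ a t) {F : ι}
    (hF : F ∈ T) {i : Fin n} (hi : b F i < a F i) : weight T b < weight T a := by
  refine Finset.sum_lt_sum (fun t ht => ?_) ⟨F, hF, ?_⟩
  · exact Nat.add_le_add_right (Finset.sum_le_sum fun j _ => hab t ht j) 1
  · exact Nat.add_lt_add_right
      (Finset.sum_lt_sum (fun j _ => hab F hF j) ⟨i, Finset.mem_univ i, hi⟩) 1

lemma weight_erase_lt {T : Finset ι} {a : ι → Fin n → ℕ} {s : ι} (hs : s ∈ T) :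
    weight (T.erase s) a < weight T a := by
  rw [weight, weight, ← Finset.add_sum_erase T _ hs]
  omega

omit [DecidableEq ι] in
lemma AssocCert.of_sub {T : Finset ι} {a : ι → Fin n → ℕ} {g : Fin n → ℕ} {c : Finset (Fin n)}
    (h : AssocCert T (fun t => a t - g) c) : AssocCert T a c := by
  obtain ⟨u, hu, hv⟩ := h
  refine ⟨u + g, fun i hi => ?_, fun v hvc t ht hle => hv v hvc t ht fun j => ?_⟩
  · obtain ⟨t, ht, hle⟩ := hu i hi
    refine ⟨t, ht, fun j => ?_⟩
    have := hle j
    simp only [Pi.add_apply, Pi.sub_apply] at this ⊢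
    omega
  · have := hle j
    simp only [Pi.add_apply, Pi.sub_apply] at this ⊢
    omega

lemma AssocCert.of_erase {T : Finset ι} {a : ι → Fin n → ℕ} {t s : ι} (ht : t ∈ T) (hts : t ≠ s)
    (hle : a t ≤ a s) {c : Finset (Fin n)} (h : AssocCert (T.erase s) a c) : AssocCert T a c := by
  obtain ⟨u, hu, hv⟩ := h
  refine ⟨u, fun i hi => ?_, fun v hvc r hr hru => ?_⟩
  · obtain ⟨r, hr, h⟩ := hu i hi
    exact ⟨r, Finset.mem_of_mem_erase hr, h⟩
  · by_cases hrs : r = s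
    · subst hrs
      exact hv v hvc t (Finset.mem_erase.2 ⟨hts, ht⟩) (hle.trans hru)
    · exact hv v hvc r (Finset.mem_erase.2 ⟨hrs, hr⟩) hru

/-- Let the exponent of `x_i` in the generator `a F = g + e_i` be strictly larger than in all other
generators. Then every associated prime found for `(I, x^g)` is already one of `I`. -/
lemma AssocCert.of_update {T : Finset ι} {a : ι → Fin n → ℕ} {F : ι} {i : Fin n}
    {g : Fin n → ℕ} (hg : a F = g + Pi.single i 1) (hi : ∀ r ∈ T, r ≠ F → a r i < a F i)
    {c : Finset (Fin n)} (h : AssocCert T (Function.update a F g) c) : AssocCert T a c := by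
  obtain ⟨u, hu, hv⟩ := h
  have hupd : ∀ r, Function.update a F g r ≤ a r := by
    intro r
    by_cases hrF : r = F
    · subst hrF
      rw [Function.update_self, hg]
      exact le_self_add
    · simp [hrF]
  by_cases hA : ∀ j ∈ c, ∃ v : Fin n → ℕ, (∀ l ∈ c, v l = 0) ∧
      ∃ r ∈ T, r ≠ F ∧ a r ≤ u + v + Pi.single j 1
  · -- each `j ∈ c` is witnessed by a generator other than `F` after adding some `v j` off `c`
    have hA' : ∀ j, ∃ v : Fin n → ℕ, (∀ l ∈ c, v l = 0) ∧
        (j ∈ c → ∃ r ∈ T, r ≠ F ∧ a r ≤ u + v + Pi.single j 1) := by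
      intro j
      by_cases hj : j ∈ c
      · obtain ⟨v, h1, h2⟩ := hA j hj
        exact ⟨v, h1, fun _ => h2⟩
      · exact ⟨0, fun _ _ => rfl, fun h => absurd h hj⟩
    choose v hvc hvr using hA'
    refine ⟨u + ∑ j, v j, fun j hj => ?_, fun w hw t ht hle => ?_⟩
    · obtain ⟨r, hr, -, hle⟩ := hvr j hj
      refine ⟨r, hr, hle.trans ?_⟩
      gcongr
      exact Finset.single_le_sum (f := v) (fun _ _ => zero_le) (Finset.mem_univ j)
    · refine hv ((∑ j, v j) + w) (fun l hl => ?_) t ht ?_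
      · simp [hw l hl, hvc _ l hl]
      · rw [← add_assoc]
        exact (hupd t).trans hle
  · push Not at hA
    obtain ⟨j₀, hj₀, hA⟩ := hA
    have hgle : g ≤ u + Pi.single j₀ 1 := by
      obtain ⟨t, ht, hle⟩ := hu j₀ hj₀
      by_cases htF : t = F
      · subst htF; simpa using hle
      · rw [Function.update_of_ne htF] at hle
        exact absurd (by simpa using hle) (hA 0 (fun _ _ => rfl) t ht htF)
    refine ⟨u + Pi.single i 1, fun j hj => ?_, fun v hvc t ht hle => ?_⟩
    · obtain ⟨t, ht, hle⟩ := hu j hj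
      refine ⟨t, ht, ?_⟩
      by_cases htF : t = F
      · subst htF
        rw [Function.update_self] at hle
        rw [hg, add_right_comm]
        gcongr
      · rw [Function.update_of_ne htF] at hle
        rw [add_right_comm]
        exact hle.trans le_self_add
    · by_cases htF : t = F
      · subst htF
        refine hv v hvc t ht ?_
        rw [Function.update_self]
        rw [hg, add_right_comm] at hle
        exact le_of_add_le_add_right hle
      · refine hA v hvc t ht htF fun l => ?_
        have h1 := hle l
        have h2 := hgle l
        have h3 := hi t ht htF
        rw [hg] at h3
        by_cases hl : l = i
        · subst hl
          simp only [Pi.add_apply, Pi.single_eq_same] at h1 h2 h3 ⊢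
          omega
        · simp only [Pi.add_apply, Pi.single_eq_of_ne hl] at h1 h2 h3 ⊢
          omega

lemma sup_span_mon_eq {k : Type} [Field k] {T : Finset ι} {a : ι → Fin n → ℕ} {F : ι} (hF : F ∈ T)
    {g : Fin n → ℕ} (hg : g ≤ a F) :
    genIdeal k T a ⊔ Ideal.span {mon k g} = genIdeal k T (Function.update a F g) := by
  apply le_antisymm
  · refine sup_le (genIdeal_le.2 fun t ht => mon_mem_genIdeal ht ?_) ?_
    · by_cases htF : t = F
      · subst htF; simpa using hg
      · simp [htF]
    · rw [Ideal.span_singleton_le_iff_mem]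
      exact mon_mem_genIdeal hF (by simp)
  · refine genIdeal_le.2 fun t ht => ?_
    by_cases htF : t = F
    · subst htF
      rw [Function.update_self]
      exact Ideal.mem_sup_right (Ideal.mem_span_singleton_self _)
    · rw [Function.update_of_ne htF]
      exact Ideal.mem_sup_left (mon_mem_genIdeal ht le_rfl)

lemma genIdeal_erase {k : Type} [Field k] {T : Finset ι} {a : ι → Fin n → ℕ} {t s : ι} (ht : t ∈ T)
    (hts : t ≠ s) (hle : a t ≤ a s) : genIdeal k (T.erase s) a = genIdeal k T a := by
  apply le_antisymm
  · exact genIdeal_le.2 fun r hr => mon_mem_genIdeal (Finset.mem_of_mem_erase hr) le_rfl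
  · refine genIdeal_le.2 fun r hr => ?_
    by_cases hrs : r = s
    · subst hrs
      exact mon_mem_genIdeal (Finset.mem_erase.2 ⟨hts, ht⟩) hle
    · exact mon_mem_genIdeal (Finset.mem_erase.2 ⟨hrs, hr⟩) le_rfl

/-- An irredundant forest without the monomial `1` which does not consist of variables only has a
member `F` that is not a variable and a variable `x_i` whose exponent in `F` exceeds all its
exponents in other members: take for `F` a leaf of the subforest of the members that are not
variables. -/
lemma ExpForest.exists_free_variable {T : Finset ι} {a : ι → Fin n → ℕ} (h : ExpForest T a)
    (hred : ∀ t ∈ T, ∀ s ∈ T, t ≠ s → ¬ a t ≤ a s) (hzero : ∀ t ∈ T, a t ≠ 0)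
    (hvar : ∃ t ∈ T, ∀ i, a t ≠ Pi.single i 1) :
    ∃ F ∈ T, (∀ i, a F ≠ Pi.single i 1) ∧ ∃ i, 0 < a F i ∧ ∀ r ∈ T, r ≠ F → a r i < a F i := by
  classical
  let Γ := T.filter fun t => ∀ i, a t ≠ Pi.single i 1
  have hΓT : Γ ⊆ T := Finset.filter_subset _ _
  obtain ⟨t₀, ht₀, ht₀'⟩ := hvar
  obtain ⟨F, hF, hleaf⟩ := h Γ hΓT ⟨t₀, Finset.mem_filter.2 ⟨ht₀, ht₀'⟩⟩
  have hFT : F ∈ T := hΓT hF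
  refine ⟨F, hFT, (Finset.mem_filter.1 hF).2, ?_⟩
  suffices hi : ∃ i, 0 < a F i ∧ ∀ r ∈ Γ.erase F, a r i < a F i by
    obtain ⟨i, hi0, hi⟩ := hi
    refine ⟨i, hi0, fun r hr hrF => ?_⟩
    by_cases hrΓ : r ∈ Γ
    · exact hi r (Finset.mem_erase.2 ⟨hrF, hrΓ⟩)
    · -- `a r` is a variable, and it does not divide `a F`
      simp only [Γ, Finset.mem_filter, hr, true_and, not_forall, not_not] at hrΓ
      obtain ⟨j, hj⟩ := hrΓ
      by_cases hji : i = j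
      · exfalso
        subst hji
        refine hred r hr F hFT hrF ?_
        rw [hj, single_one_le_iff]
        exact hi0
      · rw [hj, Pi.single_eq_of_ne hji]
        exact hi0
  rcases hleaf with hleaf | ⟨s, hs, hs'⟩
  · obtain ⟨i, hi⟩ := Function.ne_iff.1 (hzero F hFT)
    refine ⟨i, Nat.pos_of_ne_zero hi, fun r hr => ?_⟩
    rw [hleaf] at hr
    simp at hr
  · have hsF := Finset.ne_of_mem_erase hs
    have := hred F hFT s (hΓT (Finset.mem_of_mem_erase hs)) hsF.symm
    simp only [Pi.le_def, not_forall, not_le] at this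
    obtain ⟨i, hi⟩ := this
    refine ⟨i, by omega, fun r hr => ?_⟩
    have := hs' r hr i
    simp only [Pi.inf_apply] at this
    omega

omit [DecidableEq ι] in
lemma genIdeal_eq_varIdeal {k : Type} [Field k] {T : Finset ι} {a : ι → Fin n → ℕ}
    {c : Finset (Fin n)} (hT : ∀ t ∈ T, ∃ i ∈ c, a t = Pi.single i 1)
    (hc : ∀ i ∈ c, ∃ t ∈ T, a t = Pi.single i 1) : genIdeal k T a = varIdeal k c := by
  have hX : ∀ i : Fin n, mon k (Pi.single i 1) = X i := by
    intro i
    rw [mon_eq_monomial, X]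
    congr 1
    ext j
    simp
  apply le_antisymm
  · refine genIdeal_le.2 fun t ht => ?_
    obtain ⟨i, hi, h⟩ := hT t ht
    rw [h, hX, X_mem_varIdeal]
    exact hi
  · rw [varIdeal, Ideal.span_le]
    rintro _ ⟨i, hi, rfl⟩
    obtain ⟨t, ht, h⟩ := hc i hi
    rw [← hX, ← h]
    exact mon_mem_genIdeal ht le_rfl

/-- The depth of a quotient by the monomial ideal of a forest is at least the smallest depth of a
quotient by one of its associated primes. For a generator `x^(a F) = x^g x_i` in which `x_i` has
a larger exponent than in all other generators, the ideals `I : x^g` and `(I, x^g)` are again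
ideals of forests, smaller than `I`, and their associated primes are among those of `I`. -/
theorem ExpForest.extVanish {k : Type} [Field k] {P : Ideal (MvPolynomial (Fin n) k)} {d : ℕ}
    {T : Finset ι} {a : ι → Fin n → ℕ} (hfor : ExpForest T a)
    (hass : ∀ c, AssocCert T a c → ExtVanish P d (varIdeal k c)) :
    ExtVanish P d (genIdeal k T a) := by
  classical
  induction hN : weight T a using Nat.strong_induction_on generalizing T a with
  | _ N ih =>
  subst hN
  by_cases hzero : ∃ t ∈ T, a t = 0
  · obtain ⟨t, ht, ht0⟩ := hzero
    have : genIdeal k T a = ⊤ := by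
      rw [Ideal.eq_top_iff_one]
      have h1 : mon k (0 : Fin n → ℕ) = 1 := by simp [mon]
      rw [← h1]
      exact mon_mem_genIdeal ht ht0.le
    rw [this]
    exact extVanish_top P d
  by_cases hred : ∃ t ∈ T, ∃ s ∈ T, t ≠ s ∧ a t ≤ a s
  · obtain ⟨t, ht, s, hs, hts, hle⟩ := hred
    rw [← genIdeal_erase ht hts hle]
    exact ih _ (weight_erase_lt hs) (hfor.subset (Finset.erase_subset _ _))
      (fun c hc => hass c (hc.of_erase ht hts hle)) rfl
  push Not at hzero hred
  by_cases hvar : ∃ t ∈ T, ∀ i, a t ≠ Pi.single i 1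
  · obtain ⟨F, hF, hFvar, i, hi0, hi⟩ := hfor.exists_free_variable hred hzero hvar
    obtain ⟨g, hg⟩ : ∃ g : Fin n → ℕ, a F = g + Pi.single i 1 := by
      refine ⟨a F - Pi.single i 1, (tsub_add_cancel_of_le ?_).symm⟩
      rw [single_one_le_iff]
      exact hi0
    have hgle : g ≤ a F := hg ▸ le_self_add
    obtain ⟨l, hl⟩ : ∃ l, g l ≠ 0 := by
      by_contra! hg0
      exact hFvar i (by rw [hg, show g = 0 from funext hg0, zero_add])
    have hgr : ∀ r ∈ T, r ≠ F → a F ⊓ a r ≤ g := by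
      intro r hr hrF j
      have h1 := hi r hr hrF
      rw [hg] at h1 ⊢
      by_cases hj : j = i
      · subst hj
        simp only [Pi.inf_apply, Pi.add_apply, Pi.single_eq_same] at h1 ⊢
        omega
      · simp [Pi.single_eq_of_ne hj]
    have hupd : ∀ r ∈ T, Function.update a F g r ≤ a r := by
      intro r _
      by_cases hrF : r = F
      · subst hrF; simpa using hgle
      · simp [hrF]
    refine ExtVanish.of_colon_of_sup (g := mon k g) (mon_mul_mem_genIdeal g) ?_ ?_
    · refine ih _ (weight_lt_weight (fun t _ => tsub_le_self) hF (i := l) ?_) (hfor.sub g)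
        (fun c hc => hass c hc.of_sub) rfl
      have : g l ≤ a F l := hgle l
      change a F l - g l < a F l
      omega
    · rw [sup_span_mon_eq hF hgle]
      refine ih _ (weight_lt_weight hupd hF (i := i) ?_) (hfor.update hF hgle hgr)
        (fun c hc => hass c (hc.of_update hg hi)) rfl
      rw [Function.update_self, hg]
      simp
  · push Not at hvar
    let c : Finset (Fin n) := Finset.univ.filter fun i => ∃ t ∈ T, a t = Pi.single i 1
    have hc : ∀ i ∈ c, ∃ t ∈ T, a t = Pi.single i 1 := fun i hi => (Finset.mem_filter.1 hi).2
    have hT : ∀ t ∈ T, ∃ i ∈ c, a t = Pi.single i 1 := by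
      intro t ht
      obtain ⟨i, h⟩ := hvar t ht
      exact ⟨i, Finset.mem_filter.2 ⟨Finset.mem_univ _, t, ht, h⟩, h⟩
    rw [genIdeal_eq_varIdeal hT hc]
    refine hass c ⟨0, fun i hi => ?_, fun v hv t ht hle => ?_⟩
    · obtain ⟨t, ht, h⟩ := hc i hi
      exact ⟨t, ht, by rw [h, zero_add]⟩
    · obtain ⟨i, hic, h⟩ := hT t ht
      have := hle i
      rw [h] at this
      simp [hv i hic] at this

end Forests

/-! ### Heights of primes -/

section Heights

open RingTheory.Sequence

lemma ht_eq_height {R : Type} [CommRing R] (p : Ideal R) [hp : p.IsPrime] : ht p = p.height := by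
  have h : p.height = Order.height (⟨p, hp⟩ : PrimeSpectrum R) :=
    PrimeSpectrum.height_eq_orderHeight ⟨p, hp⟩
  rw [h]
  refine le_antisymm (iInf₂_le (⟨p, hp⟩ : PrimeSpectrum R) le_rfl) ?_
  refine le_iInf₂ fun q hq => Order.height_mono ?_
  exact hq

lemma ht_le_height {R : Type} [CommRing R] {I : Ideal R} (p : Ideal R) [hp : p.IsPrime]
    (h : I ≤ p) : ht I ≤ p.height := by
  have h' : p.height = Order.height (⟨p, hp⟩ : PrimeSpectrum R) :=
    PrimeSpectrum.height_eq_orderHeight ⟨p, hp⟩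
  rw [h']
  exact iInf₂_le (⟨p, hp⟩ : PrimeSpectrum R) h

lemma le_ht {R : Type} [CommRing R] {I : Ideal R} {x : ℕ∞}
    (h : ∀ p : Ideal R, p.IsPrime → I ≤ p → x ≤ p.height) : x ≤ ht I := by
  refine le_iInf₂ fun p hp => ?_
  rw [← PrimeSpectrum.height_eq_orderHeight]
  exact h p.asIdeal p.isPrime hp

/-- Dividing by a regular element `x ∈ P` makes an associated prime `p ≤ P` grow strictly to an
associated prime of `M/xM` inside `P`: choose a prime minimal over the annihilator of `N/xN`, where
`N` is the submodule of `M` killed by `p`. -/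
lemma exists_associatedPrime_quotSMulTop {R : Type} [CommRing R] [IsNoetherianRing R] {M : Type}
    [AddCommGroup M] [Module R M] [Module.Finite R M] {p P : Ideal R} [hP : P.IsPrime]
    (hp : p ∈ associatedPrimes R M) (hpP : p ≤ P) {x : R} (hxP : x ∈ P) (hx : IsSMulRegular M x) :
    ∃ q ∈ associatedPrimes R (QuotSMulTop x M), p < q ∧ q ≤ P := by
  have : IsNoetherian R M := isNoetherian_of_isNoetherianRing_of_finite R M
  obtain ⟨hpp, m, hm⟩ := isAssociatedPrime_iff.1 hp
  let N : Submodule R M := Submodule.torsionBySet R M (p : Set R)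
  have hmemN : ∀ y : M, y ∈ N ↔ ∀ a ∈ p, a • y = 0 := fun y =>
    ⟨fun h a ha => (Submodule.mem_torsionBySet_iff _ _).1 h ⟨a, ha⟩,
      fun h => (Submodule.mem_torsionBySet_iff _ _).2 fun a => h a a.2⟩
  have hpm : ∀ a, a ∈ p ↔ a • m = 0 := by
    intro a
    rw [hm, Submodule.mem_colon_singleton, Submodule.mem_bot]
  have hx0 : ∀ z : M, x • z = 0 → z = 0 := fun z hz => hx (by simpa using hz)
  have hmN : m ∈ N := (hmemN m).2 fun a ha => (hpm a).1 ha
  have hann : Module.annihilator R N ≤ p := by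
    intro a ha
    rw [hpm]
    exact congrArg Subtype.val (Module.mem_annihilator.1 ha ⟨m, hmN⟩)
  have hsupp : (⟨P, hP⟩ : PrimeSpectrum R) ∈ Module.support R (QuotSMulTop x N) := by
    rw [Module.support_quotSMulTop, Module.support_eq_zeroLocus]
    exact ⟨hann.trans hpP, by simpa using hxP⟩
  rw [Module.support_eq_zeroLocus] at hsupp
  have hle : Module.annihilator R (QuotSMulTop x N) ≤ P := hsupp
  obtain ⟨q, hq, hqP⟩ := Ideal.exists_minimalPrimes_le hle
  have hqass : q ∈ associatedPrimes R (QuotSMulTop x N) :=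
    Module.associatedPrimes.minimalPrimes_annihilator_subset_associatedPrimes R _ hq
  have hinj : Function.Injective (QuotSMulTop.map x N.subtype) := by
    rw [injective_iff_map_eq_zero]
    intro y
    obtain ⟨y, rfl⟩ := Submodule.Quotient.mk_surjective _ y
    intro h
    replace h : (Submodule.Quotient.mk (y : M) : QuotSMulTop x M) = 0 := h
    rw [Submodule.Quotient.mk_eq_zero, Submodule.mem_smul_pointwise_iff_exists] at h
    obtain ⟨z, -, hz⟩ := h
    have hzN : z ∈ N := (hmemN z).2 fun a ha => by
      refine hx0 _ ?_
      rw [smul_comm, hz]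
      exact (hmemN _).1 y.2 a ha
    rw [Submodule.Quotient.mk_eq_zero, Submodule.mem_smul_pointwise_iff_exists]
    exact ⟨⟨z, hzN⟩, trivial, Subtype.ext hz⟩
  refine ⟨q, IsAssociatedPrime.map_of_injective _ hqass hinj, ?_, hqP⟩
  have hannq : Module.annihilator R (QuotSMulTop x N) ≤ q := hq.1.2
  refine lt_of_le_of_ne (fun a ha => hannq ?_) fun h => ?_
  · rw [Module.mem_annihilator]
    intro y
    obtain ⟨y, rfl⟩ := Submodule.Quotient.mk_surjective _ y
    rw [← Submodule.Quotient.mk_smul]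
    have : a • y = 0 := Subtype.ext ((hmemN _).1 y.2 a ha)
    rw [this, Submodule.Quotient.mk_zero]
  · have hxq : x ∈ q := by
      refine hannq ?_
      rw [Module.mem_annihilator]
      intro y
      obtain ⟨y, rfl⟩ := Submodule.Quotient.mk_surjective _ y
      rw [← Submodule.Quotient.mk_smul, Submodule.Quotient.mk_eq_zero,
        Submodule.mem_smul_pointwise_iff_exists]
      exact ⟨y, trivial, rfl⟩
    rw [← h, hpm] at hxq
    have hm0 : m = 0 := hx0 _ hxq
    refine hpp.ne_top ((Ideal.eq_top_iff_one _).2 ?_)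
    rw [hpm, hm0, smul_zero]

/-- Each term of a regular sequence on `M` in the prime `P` makes an associated prime inside `P` grow
strictly, so a sequence of length `l` yields a chain of `l` steps between `p` and `P`. -/
lemma height_add_length_le {R : Type} [CommRing R] [IsNoetherianRing R] {P : Ideal R}
    [hP : P.IsPrime] (rs : List R) : ∀ (M : Type) [AddCommGroup M] [Module R M]
    [Module.Finite R M] (p : Ideal R), p ∈ associatedPrimes R M → p ≤ P → (∀ r ∈ rs, r ∈ P) →
      IsWeaklyRegular M rs → p.height + (rs.length : ℕ∞) ≤ P.height := by
  induction rs with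
  | nil =>
    intro M _ _ _ p _ hpP _ _
    simpa using Ideal.height_mono hpP
  | cons x rs ih =>
    intro M _ _ _ p hp hpP hrs hreg
    rw [isWeaklyRegular_cons_iff] at hreg
    obtain ⟨q, hq, hpq, hqP⟩ :=
      exists_associatedPrime_quotSMulTop hp hpP (hrs x (by simp)) hreg.1
    have h1 := ih (QuotSMulTop x M) q hq hqP (fun r hr => hrs r (by simp [hr])) hreg.2
    have := hp.isPrime
    have := hq.isPrime
    have h2 : p.height + 1 ≤ q.height := Ideal.height_add_one_le_of_lt_of_isPrime hpq
    refine le_trans ?_ h1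
    rw [List.length_cons, Nat.cast_add, Nat.cast_one, add_comm (rs.length : ℕ∞), ← add_assoc]
    gcongr

/-- A chain of primes of length `d` below `Q` lifts to one below the preimage of `Q`, starting at a
prime that contains `I`. -/
lemma ht_add_le_height_comap {R : Type} [CommRing R] {I : Ideal R} [IsNoetherianRing (R ⧸ I)]
    (d : ℕ) : ∀ (Q : Ideal (R ⧸ I)) [Q.IsPrime], (d : ℕ∞) ≤ Q.height →
      ht I + d ≤ (Q.comap (Ideal.Quotient.mk I)).height := by
  have hI : ∀ Q : Ideal (R ⧸ I), I ≤ Q.comap (Ideal.Quotient.mk I) := fun Q x hx => by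
    rw [Ideal.mem_comap, Ideal.Quotient.eq_zero_iff_mem.2 hx]
    exact Q.zero_mem
  induction d with
  | zero =>
    intro Q _ _
    simpa using ht_le_height _ (hI Q)
  | succ d ih =>
    intro Q hQ hd
    have hfin : Q.height < ⊤ := (Ideal.height_ne_top hQ.ne_top).lt_top
    have heq : Q.height = Order.height (⟨Q, hQ⟩ : PrimeSpectrum (R ⧸ I)) :=
      PrimeSpectrum.height_eq_orderHeight ⟨Q, hQ⟩
    have hlt : (d : ℕ∞) < Order.height (⟨Q, hQ⟩ : PrimeSpectrum (R ⧸ I)) := by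
      rw [← heq]
      exact lt_of_lt_of_le (by exact_mod_cast Nat.lt_succ_self d) hd
    obtain ⟨⟨Q', hQ'⟩, hQQ', hh⟩ := (Order.coe_lt_height_iff (heq ▸ hfin)).1 hlt
    have heq' : Q'.height = Order.height (⟨Q', hQ'⟩ : PrimeSpectrum (R ⧸ I)) :=
      PrimeSpectrum.height_eq_orderHeight ⟨Q', hQ'⟩
    have h1 := ih Q' (by rw [heq', hh])
    have hlt' : Q' < Q := hQQ'
    have h2 : (Q'.comap (Ideal.Quotient.mk I)).height + 1 ≤
        (Q.comap (Ideal.Quotient.mk I)).height := by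
      refine Ideal.height_add_one_le_of_lt_of_isPrime ?_
      refine lt_of_le_of_ne (Ideal.comap_mono hlt'.le) fun h => hlt'.ne ?_
      exact Ideal.comap_injective_of_surjective _ Ideal.Quotient.mk_surjective h
    rw [Nat.cast_add, Nat.cast_one, ← add_assoc]
    exact (add_le_add_left h1 1).trans h2

variable {k : Type} [Field k] {n : ℕ}

lemma height_le_card (p : Ideal (MvPolynomial (Fin n) k)) [hp : p.IsPrime] : p.height ≤ n := by
  have h := Ideal.height_le_ringKrullDim_of_ne_top hp.ne_top
  rw [MvPolynomial.ringKrullDim_of_isNoetherianRing, ringKrullDim_eq_zero_of_field, zero_add,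
    Nat.card_fin] at h
  exact_mod_cast h

lemma varIdeal_mono {c c' : Finset (Fin n)} (h : c ⊆ c') : varIdeal k c ≤ varIdeal k c' :=
  Ideal.span_mono (Set.image_mono (by exact_mod_cast h))

lemma varIdeal_lt_insert {c : Finset (Fin n)} {i : Fin n} (hi : i ∉ c) :
    varIdeal k c < varIdeal k (insert i c) := by
  refine lt_of_le_of_ne (varIdeal_mono (Finset.subset_insert i c)) fun h => hi ?_
  rw [← X_mem_varIdeal (k := k), h, X_mem_varIdeal]
  exact Finset.mem_insert_self i c

lemma card_le_height_varIdeal (c : Finset (Fin n)) : (c.card : ℕ∞) ≤ (varIdeal k c).height := by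
  induction c using Finset.induction_on with
  | empty => simp
  | insert i c hi ih =>
    rw [Finset.card_insert_of_notMem hi, Nat.cast_add, Nat.cast_one]
    exact (add_le_add_left ih 1).trans
      (Ideal.height_add_one_le_of_lt_of_isPrime (varIdeal_lt_insert hi))

lemma map_mk_varIdeal_isPrime {I : Ideal (MvPolynomial (Fin n) k)} {c : Finset (Fin n)}
    (h : I ≤ varIdeal k c) : ((varIdeal k c).map (Ideal.Quotient.mk I)).IsPrime :=
  Ideal.map_isPrime_of_surjective Ideal.Quotient.mk_surjective (by rwa [Ideal.mk_ker])

/-- Modulo `I` the primes generated by `c` and more and more variables of `s` still form a chain. -/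
lemma card_le_height_map_varIdeal {I : Ideal (MvPolynomial (Fin n) k)} {c : Finset (Fin n)}
    (h : I ≤ varIdeal k c) (s : Finset (Fin n)) : Disjoint c s →
      (s.card : ℕ∞) ≤ ((varIdeal k (s ∪ c)).map (Ideal.Quotient.mk I)).height := by
  induction s using Finset.induction_on with
  | empty => simp
  | insert i s hi ih =>
    intro hd
    rw [Finset.disjoint_insert_right] at hd
    have hI : I ≤ varIdeal k (s ∪ c) := h.trans (varIdeal_mono Finset.subset_union_right)
    have hic : i ∉ s ∪ c := by simp [hi, hd.1]
    have hlt := varIdeal_lt_insert (k := k) hic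
    have := map_mk_varIdeal_isPrime hI
    have := map_mk_varIdeal_isPrime (hI.trans hlt.le)
    rw [Finset.card_insert_of_notMem hi, Nat.cast_add, Nat.cast_one, Finset.insert_union]
    refine (add_le_add_left (ih hd.2) 1).trans (Ideal.height_add_one_le_of_lt_of_isPrime ?_)
    refine lt_of_le_of_ne (Ideal.map_mono hlt.le) fun heq => hlt.ne ?_
    rw [← Ideal.comap_map_mk hI, heq, Ideal.comap_map_mk (hI.trans hlt.le)]

/-- The homogeneous maximal ideal. -/
lemma varIdeal_univ_isMaximal : (varIdeal k (Finset.univ : Finset (Fin n))).IsMaximal := by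
  have h : varIdeal k (Finset.univ : Finset (Fin n)) =
      RingHom.ker (constantCoeff (R := k) (σ := Fin n)) := by
    ext f
    rw [mem_varIdeal, RingHom.mem_ker, constantCoeff_eq]
    constructor
    · intro h
      by_contra h0
      obtain ⟨i, -, hi⟩ := h 0 (mem_support_iff.2 h0)
      simp at hi
    · intro h0 m hm
      by_contra! hm0
      have : m = 0 := Finsupp.ext fun i => hm0 i (Finset.mem_univ i)
      exact mem_support_iff.1 hm (this ▸ h0)
  rw [h]
  exact RingHom.ker_isMaximal_of_surjective _ fun x => ⟨C x, constantCoeff_C _ x⟩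

variable {ι : Type} {T : Finset ι} {a : ι → Fin n → ℕ}

/-- Every prime containing a monomial ideal contains a prime generated by variables that already
contains the monomial ideal. -/
lemma exists_varIdeal_between {q : Ideal (MvPolynomial (Fin n) k)} [hq : q.IsPrime]
    (h : genIdeal k T a ≤ q) : ∃ c, genIdeal k T a ≤ varIdeal k c ∧ varIdeal k c ≤ q := by
  classical
  refine ⟨Finset.univ.filter fun i => X i ∈ q, genIdeal_le.2 fun t ht => ?_, ?_⟩
  · have := genIdeal_le.1 h t ht
    obtain ⟨i, -, hi⟩ := Ideal.IsPrime.prod_mem_iff.1 this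
    have hX : (X i : MvPolynomial (Fin n) k) ∈ q := hq.mem_of_pow_mem _ hi
    refine Ideal.IsPrime.prod_mem_iff.2 ⟨i, Finset.mem_univ i, Ideal.pow_mem_of_mem _ ?_ _ ?_⟩
    · rw [X_mem_varIdeal]; simp [hX]
    · refine Nat.pos_of_ne_zero fun h0 => hq.ne_top ((Ideal.eq_top_iff_one _).2 ?_)
      simpa [h0] using hi
  · rw [varIdeal, Ideal.span_le]
    rintro _ ⟨i, hi, rfl⟩
    simpa using hi

/-- Associated primes of a monomial ideal lie in the homogeneous maximal ideal: a polynomial with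
nonzero constant term is a nonzerodivisor, by looking at a monomial of least degree outside the
ideal. -/
lemma associatedPrime_le_varIdeal_univ {p : Ideal (MvPolynomial (Fin n) k)}
    (hp : p ∈ associatedPrimes (MvPolynomial (Fin n) k)
      (MvPolynomial (Fin n) k ⧸ genIdeal k T a)) : p ≤ varIdeal k Finset.univ := by
  classical
  obtain ⟨hpp, f, hf⟩ := isAssociatedPrime_iff.1 hp
  obtain ⟨f, rfl⟩ := Submodule.Quotient.mk_surjective _ f
  have hmem : ∀ g, g ∈ p ↔ g * f ∈ genIdeal k T a := by
    intro g
    rw [hf, Submodule.mem_colon_singleton, Submodule.mem_bot, ← Submodule.Quotient.mk_smul,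
      Submodule.Quotient.mk_eq_zero, smul_eq_mul]
  intro g hg
  rw [mem_varIdeal]
  intro m hm
  by_contra! hm0
  have hg0 : coeff 0 g ≠ 0 := by
    have : m = 0 := Finsupp.ext fun i => hm0 i (Finset.mem_univ i)
    exact this ▸ mem_support_iff.1 hm
  let B := f.support.filter fun m : Fin n →₀ ℕ => ∀ t ∈ T, ¬ a t ≤ ⇑m
  have hB : B.Nonempty := by
    by_contra hB
    rw [Finset.not_nonempty_iff_eq_empty, Finset.filter_eq_empty_iff] at hB
    refine hpp.ne_top ((Ideal.eq_top_iff_one _).2 ?_)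
    rw [hmem, one_mul, mem_genIdeal]
    intro m hm
    simpa using hB hm
  obtain ⟨m₀, hm₀, hmin⟩ := B.exists_min_image (fun m => m.degree) hB
  obtain ⟨hm₀f, hm₀T⟩ := Finset.mem_filter.1 hm₀
  have hcoeff : coeff m₀ (g * f) = coeff 0 g * coeff m₀ f := by
    rw [coeff_mul]
    refine Finset.sum_eq_single (0, m₀) ?_ ?_
    · rintro ⟨x, y⟩ hxy hne
      rw [Finset.HasAntidiagonal.mem_antidiagonal] at hxy
      have hxy' : x + y = m₀ := hxy
      by_contra hnz
      have hy : coeff y f ≠ 0 := right_ne_zero_of_mul hnz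
      have hyB : y ∈ B := by
        refine Finset.mem_filter.2 ⟨mem_support_iff.2 hy, fun t ht hle => hm₀T t ht ?_⟩
        refine hle.trans fun i => ?_
        rw [← hxy']
        simp
      have hdeg := hmin y hyB
      rw [← hxy', map_add] at hdeg
      have hx0 : x = 0 := (Finsupp.degree_eq_zero_iff x).1 (by omega)
      subst hx0
      exact hne (by rw [← hxy', zero_add])
    · intro h
      exact absurd (Finset.HasAntidiagonal.mem_antidiagonal.2 (zero_add m₀)) h
  obtain ⟨t, ht, hle⟩ := mem_genIdeal.1 ((hmem g).1 hg) m₀ (by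
    rw [mem_support_iff, hcoeff]
    exact mul_ne_zero hg0 (mem_support_iff.1 hm₀f))
  exact hm₀T t ht hle

end Heights

/-! ### Cohen–Macaulayness and unmixedness -/

section CohenMacaulay

open RingTheory.Sequence

lemma rdepth_le_height {A : Type} [CommRing A] [IsNoetherianRing A] (P : Ideal A) [hP : P.IsPrime] :
    rdepth P A ≤ P.height := by
  refine sSup_le ?_
  rintro _ ⟨rs, rfl, hrs, hreg⟩
  have hle : Module.annihilator A A ≤ P := by
    intro x hx
    have : x • (1 : A) = 0 := Module.mem_annihilator.1 hx 1
    rw [smul_eq_mul, mul_one] at this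
    exact this ▸ P.zero_mem
  obtain ⟨q, hq, hqP⟩ := Ideal.exists_minimalPrimes_le hle
  refine le_trans le_add_self (height_add_length_le rs A q
    (Module.associatedPrimes.minimalPrimes_annihilator_subset_associatedPrimes A A hq) hqP hrs
    hreg.toIsWeaklyRegular)

variable {k : Type} [Field k] {n : ℕ} {ι : Type} {T : Finset ι} {a : ι → Fin n → ℕ}

/-- If the quotient by a monomial ideal is Cohen-Macaulay, then all associated primes have the height
of the ideal. Only the homogeneous maximal ideal `o` matters: it contains every associated prime
`p`, so that `ht p + depth ≤ n`, while the depth at `o` is at least `n - |c|` for every prime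
`(x_i : i ∈ c)` containing the ideal. -/
lemma ht_associatedPrime_eq (hCM : IsCMRing (MvPolynomial (Fin n) k ⧸ genIdeal k T a))
    {p : Ideal (MvPolynomial (Fin n) k)} (hp : p ∈ associatedPrimes (MvPolynomial (Fin n) k)
      (MvPolynomial (Fin n) k ⧸ genIdeal k T a)) : ht p = ht (genIdeal k T a) := by
  have hpp : p.IsPrime := hp.isPrime
  have hIp : genIdeal k T a ≤ p := by
    have h := IsAssociatedPrime.annihilator_le hp
    rwa [Submodule.annihilator_top, Ideal.annihilator_quotient] at h
  have hpo := associatedPrime_le_varIdeal_univ hp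
  have homax := varIdeal_univ_isMaximal (k := k) (n := n)
  have hIo := hIp.trans hpo
  set I := genIdeal k T a with hI
  set o := varIdeal k (Finset.univ : Finset (Fin n)) with ho
  have hmax : (o.map (Ideal.Quotient.mk I)).IsMaximal :=
    Ideal.IsMaximal.map_of_surjective_of_ker_le Ideal.Quotient.mk_surjective
      (by rwa [Ideal.mk_ker])
  have hcm := hCM _ hmax
  rw [ht_eq_height] at hcm
  obtain ⟨h, hh⟩ : ∃ h : ℕ, p.height = h :=
    ⟨_, (ENat.natCast_toNat (ne_top_of_le_ne_top (ENat.natCast_ne_top n) (height_le_card p))).symm⟩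
  have hhn : h ≤ n := by
    have := height_le_card p
    rw [hh] at this
    exact_mod_cast this
  -- every regular sequence at the origin has length at most `n - h`
  have hdepth : rdepth (o.map (Ideal.Quotient.mk I)) (MvPolynomial (Fin n) k ⧸ I) ≤
      ((n - h : ℕ) : ℕ∞) := by
    refine sSup_le ?_
    rintro _ ⟨rs, rfl, hrs, hreg⟩
    obtain ⟨rs, rfl⟩ : ∃ rs' : List (MvPolynomial (Fin n) k),
        rs'.map (algebraMap _ (MvPolynomial (Fin n) k ⧸ I)) = rs := by
      exact List.map_surjective_iff.2 Ideal.Quotient.mk_surjective rs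
    have hreg' := (isWeaklyRegular_map_algebraMap_iff (MvPolynomial (Fin n) k ⧸ I)
      (MvPolynomial (Fin n) k ⧸ I) rs).1 hreg.toIsWeaklyRegular
    have hle := height_add_length_le (P := o) rs _ p hp hpo (fun r hr => by
      rw [← Ideal.comap_map_mk hIo]
      exact hrs _ (List.mem_map_of_mem hr)) hreg'
    have := hle.trans (height_le_card o)
    rw [hh] at this
    rw [List.length_map]
    have h' : h + rs.length ≤ n := by exact_mod_cast this
    exact_mod_cast (by omega : rs.length ≤ n - h)
  rw [ht_eq_height]
  refine le_antisymm (le_ht fun q hq hIq => ?_) (ht_le_height p hIp)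
  obtain ⟨c, hIc, hcq⟩ := exists_varIdeal_between hIq
  refine le_trans ?_ ((card_le_height_varIdeal c).trans (Ideal.height_mono hcq))
  have hchain := card_le_height_map_varIdeal hIc cᶜ disjoint_compl_right
  rw [Finset.union_comm, Finset.union_compl, ← ho, ← hI, ← hcm] at hchain
  have h1 := hchain.trans hdepth
  rw [Finset.card_compl, Fintype.card_fin] at h1
  have h2 : n - c.card ≤ n - h := by exact_mod_cast h1
  have h3 : c.card ≤ n := by simpa using c.card_le_univ
  rw [hh]
  exact_mod_cast (by omega : h ≤ c.card)

/-- An unmixed monomial ideal of a forest has a Cohen-Macaulay quotient. -/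
lemma ExpForest.isCMRing [DecidableEq ι] (hfor : ExpForest T a)
    (hunm : ∀ p ∈ associatedPrimes (MvPolynomial (Fin n) k)
      (MvPolynomial (Fin n) k ⧸ genIdeal k T a), ht p = ht (genIdeal k T a)) :
    IsCMRing (MvPolynomial (Fin n) k ⧸ genIdeal k T a) := by
  have hvan : ∀ (J : Ideal (MvPolynomial (Fin n) k)) (e : ℕ),
      (∀ c, AssocCert T a c → ExtVanish J e (varIdeal k c)) → ExtVanish J e (genIdeal k T a) :=
    fun J e h => hfor.extVanish h
  generalize hI : genIdeal k T a = I at hunm hvan ⊢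
  intro P hP
  rw [ht_eq_height]
  refine le_antisymm (rdepth_le_height P) ?_
  have hmax : (P.comap (Ideal.Quotient.mk I)).IsMaximal :=
    Ideal.comap_isMaximal_of_surjective _ Ideal.Quotient.mk_surjective
  have hIP : I ≤ P.comap (Ideal.Quotient.mk I) := fun x hx => by
    rw [Ideal.mem_comap, Ideal.Quotient.eq_zero_iff_mem.2 hx]
    exact P.zero_mem
  have hn := height_le_card (P.comap (Ideal.Quotient.mk I))
  obtain ⟨d, hd⟩ : ∃ d : ℕ, P.height = d :=
    ⟨_, (ENat.natCast_toNat (Ideal.height_ne_top hP.ne_top)).symm⟩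
  have hadd := (ht_add_le_height_comap d P hd.ge).trans hn
  obtain ⟨h, hh⟩ : ∃ h : ℕ, ht I = h :=
    ⟨_, (ENat.natCast_toNat (ne_top_of_le_ne_top (ENat.natCast_ne_top n)
      (le_self_add.trans hadd))).symm⟩
  rw [hh] at hadd
  have hhd : h + d ≤ n := by exact_mod_cast hadd
  have hext : ExtVanish (P.comap (Ideal.Quotient.mk I)) (n - h) I := by
    refine hvan _ _ fun c hc => extVanish_varIdeal hmax c _ ?_
    have h1 := card_le_height_varIdeal (k := k) c
    rw [← ht_eq_height, hunm _ (hI ▸ hc.mem_associatedPrimes), hh] at h1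
    have h2 : c.card ≤ h := by exact_mod_cast h1
    omega
  obtain ⟨rs, hlen, hrs, hreg⟩ := (extVanish_iff_exists_isRegular hmax hIP _).1 hext
  have hmem : ∀ r ∈ rs.map (algebraMap _ (MvPolynomial (Fin n) k ⧸ I)), r ∈ P := by
    intro r hr
    obtain ⟨r', hr', rfl⟩ := List.mem_map.1 hr
    exact hrs r' hr'
  have hdle : (d : ℕ∞) ≤ ((n - h : ℕ) : ℕ∞) := by exact_mod_cast (by omega : d ≤ n - h)
  rw [hd]
  refine hdle.trans (le_sSup ⟨rs.map (algebraMap _ (MvPolynomial (Fin n) k ⧸ I)),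
    by rw [List.length_map, hlen], hmem, ?_, ?_⟩)
  · exact (isWeaklyRegular_map_algebraMap_iff (MvPolynomial (Fin n) k ⧸ I)
      (MvPolynomial (Fin n) k ⧸ I) rs).2 hreg.toIsWeaklyRegular
  · rw [smul_eq_mul, Ideal.mul_top]
    intro htop
    exact hP.ne_top (top_le_iff.1 (htop.le.trans (Ideal.span_le.2 hmem)))

/-- Exponentwise minima and comparisons of bounded exponent vectors are intersections and
inclusions of the facets of the polarization. -/
lemma expForest_of_isForest {m n q : ℕ} {A : Fin q → Fin n → ℕ} (hA : ∀ t i, A t i ≤ m + 1)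
    (hmin : ∀ t t', suppF m (A t) ⊆ suppF m (A t') → t = t')
    (h : IsForest (facetComplex m A)) : ExpForest Finset.univ A := by
  intro Γ _ hne
  obtain ⟨F, hF, hleaf⟩ := h (Γ.image fun t => suppF m (A t))
    (Finset.image_subset_image (Finset.subset_univ _)) (hne.image _)
  obtain ⟨t, ht, rfl⟩ := Finset.mem_image.1 hF
  refine ⟨t, ht, ?_⟩
  rcases hleaf with hleaf | ⟨G, hG, hleaf⟩
  · left
    refine Finset.eq_singleton_iff_unique_mem.2 ⟨ht, fun r hr => ?_⟩
    have := Finset.mem_image_of_mem (fun t => suppF m (A t)) hr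
    rw [hleaf, Finset.mem_singleton] at this
    exact hmin r t this.subset
  · right
    obtain ⟨hGne, hG⟩ := Finset.mem_erase.1 hG
    obtain ⟨s, hs, rfl⟩ := Finset.mem_image.1 hG
    refine ⟨s, Finset.mem_erase.2 ⟨fun hst => hGne (by rw [hst]), hs⟩, fun r hr i => ?_⟩
    obtain ⟨hrt, hr⟩ := Finset.mem_erase.1 hr
    have hsub := hleaf _ (Finset.mem_erase.2
      ⟨fun heq => hrt (hmin r t heq.subset), Finset.mem_image_of_mem _ hr⟩)
    rw [Pi.inf_apply]
    by_contra hlt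
    have h1 := hA t i
    have h2 : A s i < A t i ∧ A s i < A r i := by
      rw [not_le, lt_inf_iff] at hlt
      exact hlt
    -- the vertex `(i, A s i)` lies in the facets of `t` and `r` but not in that of `s`
    have h3 : ((i, ⟨A s i, by omega⟩) : Fin n × Fin (m + 1)) ∈ suppF m (A s) :=
      hsub (by simp [suppF, h2])
    simp [suppF] at h3

end CohenMacaulay

/-- if `𝒫(I)` is the facet ideal of a simplicial tree, then `R/I` is
Cohen–Macaulay iff `I` is unmixed (all associated primes of `R/I` have height equal
to the height of `I`). -/
theorem cm_iff_unmixed (k : Type) [Field k] (m n q : ℕ)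
    (A : Fin q → Fin n → ℕ) (hA : ∀ t i, A t i ≤ m + 1)
    (hmin : ∀ t t', suppF m (A t) ⊆ suppF m (A t') → t = t')
    (hTree : IsTree (facetComplex m A)) :
    IsCMRing (MvPolynomial (Fin n) k ⧸ monIdeal k A) ↔
      ∀ p ∈ associatedPrimes (MvPolynomial (Fin n) k)
          (MvPolynomial (Fin n) k ⧸ monIdeal k A),
        ht p = ht (monIdeal k A) := by
  have hI : monIdeal k A = genIdeal k Finset.univ A := by
    rw [monIdeal, genIdeal, Finset.coe_univ, Set.image_univ]
  rw [hI]
  exact ⟨fun hCM p hp => ht_associatedPrime_eq hCM hp,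
    fun hunm => (expForest_of_isForest hA hmin hTree.1).isCMRing hunm⟩
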